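/- arXiv:2207.09170 — 3 statements merged into one kernel-verified Lean document; each statement's English description precedes it below -/
import Mathlib

section
/- Let r ≥ 1 and let A(r) := {s ∈ ℝ^r : s_1 + ... + s_r = 0, s_i ≤ s_{i+1} for 1 ≤ i < r, and s_r ≤ s_1 + 1}. Then the map ψ sending s = (s_1, ..., s_r) to the multiset {e^{2πi s_1}, ..., e^{2πi s_r}} of elements of Circle is a bijection from A(r) onto the set of multisets M of elements of Circle of cardinality r whose product equals 1. -/
theorem aux_exp (x y : ℝ) : Circle.exp (2 * Real.pi * x) = Circle.exp (2 * Real.pi * y) ↔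
    ∃ n : ℤ, x = y + n := by
  rw [Circle.exp_eq_exp]
  have hp := Real.pi_pos
  constructor
  · rintro ⟨m, hm⟩
    refine ⟨m, ?_⟩
    have : (2 * Real.pi) * (x - (y + m)) = 0 := by linear_combination hm
    rcases mul_eq_zero.1 this with h | h
    · linarith
    · linarith
  · rintro ⟨m, hm⟩
    exact ⟨m, by rw [hm]; ring⟩

theorem aux_prod {r : ℕ} (s : Fin r → ℝ) :
    (Multiset.map (fun i => Circle.exp (2 * Real.pi * s i)) Finset.univ.val).prod
      = Circle.exp (2 * Real.pi * ∑ i, s i) := by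
  rw [Finset.mul_sum]
  change ∏ i, Circle.exp (2 * Real.pi * s i) = _
  have h : ∀ t : Finset (Fin r), ∏ i ∈ t, Circle.exp (2 * Real.pi * s i)
      = Circle.exp (∑ i ∈ t, 2 * Real.pi * s i) := by
    intro t
    induction t using Finset.induction_on with
    | empty => simp
    | insert a t ha ih => rw [Finset.prod_insert ha, Finset.sum_insert ha, Circle.exp_add, ih]
  exact h _

theorem aux_char {r : ℕ} (s : Fin r → ℝ) (hm : Monotone s) (hb : ∀ i j, s i ≤ s j + 1)
    (j : Fin r) (x : ℝ) : s j ≤ x ↔ (j : ℤ) + 1 - r ≤ ∑ i, ⌊x - s i⌋ := by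
  have hcard : ∑ i : Fin r, (if i < j then (0 : ℤ) else -1) = j - r := by
    have : ∀ i : Fin r, (if i < j then (0 : ℤ) else -1) = (if i < j then 1 else 0) - 1 := by
      intro i; split_ifs <;> simp
    have e : (Finset.univ.filter (fun i : Fin r => i < j)) = Finset.Iio j := by ext; simp
    simp only [this, Finset.sum_sub_distrib, Finset.sum_boole, e, Fin.card_Iio]
    simp
  have hcard' : ∑ i : Fin r, (if i ≤ j then (0 : ℤ) else -1) = j + 1 - r := by
    have : ∀ i : Fin r, (if i ≤ j then (0 : ℤ) else -1) = (if i ≤ j then 1 else 0) - 1 := by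
      intro i; split_ifs <;> simp
    have e : (Finset.univ.filter (fun i : Fin r => i ≤ j)) = Finset.Iic j := by ext; simp
    simp only [this, Finset.sum_sub_distrib, Finset.sum_boole, e, Fin.card_Iic]
    simp
  constructor
  · intro h
    rw [← hcard']
    apply Finset.sum_le_sum
    intro i _
    split_ifs with hij
    · exact Int.le_floor.2 (by push_cast; linarith [hm hij])
    · exact Int.le_floor.2 (by push_cast; linarith [hb i j])
  · intro h
    by_contra! hx
    have : ∑ i, ⌊x - s i⌋ ≤ j - r := by
      rw [← hcard]
      apply Finset.sum_le_sum
      intro i _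
      split_ifs with hij
      · exact Int.lt_add_one_iff.1 (Int.floor_lt.2 (by push_cast; linarith [hb j i]))
      · have := hm (not_lt.1 hij)
        exact Int.lt_add_one_iff.1 (Int.floor_lt.2 (by push_cast; linarith))
    linarith

theorem aux_fract (x y : ℝ) :
    Int.fract (x - Complex.arg (Circle.exp (2 * Real.pi * y)) / (2 * Real.pi))
      = Int.fract (x - y) := by
  have h : Circle.exp (2 * Real.pi * (Complex.arg (Circle.exp (2 * Real.pi * y)) / (2 * Real.pi)))
      = Circle.exp (2 * Real.pi * y) := by
    rw [mul_div_cancel₀ _ (by positivity), Circle.exp_arg]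
  obtain ⟨n, hn⟩ := (aux_exp _ _).1 h
  rw [hn, ← sub_sub, Int.fract_sub_intCast]

theorem aux_inj {r : ℕ} (s t : Fin r → ℝ) (hm : Monotone s) (hb : ∀ i j, s i ≤ s j + 1)
    (hm' : Monotone t) (hb' : ∀ i j, t i ≤ t j + 1) (hs : ∑ i, s i = ∑ i, t i)
    (h : Multiset.map (fun i => Circle.exp (2 * Real.pi * s i)) Finset.univ.val =
      Multiset.map (fun i => Circle.exp (2 * Real.pi * t i)) Finset.univ.val) : s = t := by
  have hF : ∀ x : ℝ, ∑ i, ⌊x - s i⌋ = ∑ i, ⌊x - t i⌋ := by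
    intro x
    have h2 := congrArg (fun M => (Multiset.map (fun z : Circle =>
      Int.fract (x - Complex.arg z / (2 * Real.pi))) M).sum) h
    simp only [Multiset.map_map, Function.comp_def, aux_fract] at h2
    have h3 : ∑ i, Int.fract (x - s i) = ∑ i, Int.fract (x - t i) := h2
    simp only [Int.fract, Finset.sum_sub_distrib, hs] at h3
    have h4 : ((∑ i, ⌊x - s i⌋ : ℤ) : ℝ) = ((∑ i, ⌊x - t i⌋ : ℤ) : ℝ) := by
      push_cast; linarith
    exact_mod_cast h4
  funext j
  apply le_antisymm
  · rw [aux_char s hm hb, hF, ← aux_char t hm' hb']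
  · rw [aux_char t hm' hb', ← hF, ← aux_char s hm hb]

theorem aux_map_perm {r : ℕ} {α : Type*} (f : Fin r → α) (σ : Equiv.Perm (Fin r)) :
    Multiset.map (fun i => f (σ i)) Finset.univ.val = Multiset.map f Finset.univ.val :=
  by
  have h := congrArg (Multiset.map f) (Multiset.map_univ_val_equiv σ)
  rwa [Multiset.map_map] at h

theorem aux_lift {r : ℕ} (M : Multiset Circle) (hM : Multiset.card M = r) :
    ∃ a : Fin r → ℝ, Monotone a ∧ (∀ i, 0 ≤ a i) ∧ (∀ i, a i < 1) ∧
      Multiset.map (fun i => Circle.exp (2 * Real.pi * a i)) Finset.univ.val = M := by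
  obtain ⟨z, hz⟩ : ∃ z : Fin r → Circle, Multiset.map z Finset.univ.val = M := by
    subst hM
    induction M using Quotient.inductionOn with
    | _ l => exact ⟨l.get, (Fin.univ_val_map _).trans (by simp)⟩
  let a : Fin r → ℝ := fun i => Int.fract (Complex.arg (z i) / (2 * Real.pi))
  have ha : ∀ i, Circle.exp (2 * Real.pi * a i) = z i := by
    intro i
    have h1 : Circle.exp (2 * Real.pi * a i) =
        Circle.exp (2 * Real.pi * (Complex.arg (z i) / (2 * Real.pi))) := by
      rw [aux_exp]
      exact ⟨-⌊Complex.arg (z i) / (2 * Real.pi)⌋, by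
        simp only [a, Int.fract]; push_cast; ring⟩
    rw [h1, mul_div_cancel₀ _ (by positivity), Circle.exp_arg]
  refine ⟨a ∘ Tuple.sort a, Tuple.monotone_sort a, fun i => Int.fract_nonneg _,
    fun i => Int.fract_lt_one _, ?_⟩
  simp only [Function.comp, ha]
  rw [aux_map_perm z, hz]

theorem aux_surj {r : ℕ} (M : Multiset Circle) (hM : Multiset.card M = r) (hp : M.prod = 1) :
    ∃ s : Fin r → ℝ, Monotone s ∧ (∀ i j, s i ≤ s j + 1) ∧ ∑ i, s i = 0 ∧
      Multiset.map (fun i => Circle.exp (2 * Real.pi * s i)) Finset.univ.val = M := by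
  obtain ⟨a, hm, h0, h1, ha⟩ := aux_lift M hM
  obtain ⟨n, hn⟩ : ∃ n : ℤ, ∑ i, a i = n := by
    have : Circle.exp (2 * Real.pi * ∑ i, a i) = Circle.exp (2 * Real.pi * 0) := by
      rw [← aux_prod, ha, hp]; simp
    obtain ⟨n, hn⟩ := (aux_exp _ _).1 this
    exact ⟨n, by linarith⟩
  have hn0 : 0 ≤ n := by
    have : (0 : ℝ) ≤ n := hn ▸ Finset.sum_nonneg (fun i _ => h0 i)
    exact_mod_cast this
  have hnr : n ≤ r := by
    have : (n : ℝ) ≤ r := by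
      rw [← hn]
      calc ∑ i, a i ≤ ∑ i : Fin r, (1 : ℝ) := Finset.sum_le_sum (fun i _ => (h1 i).le)
        _ = r := by simp
    exact_mod_cast this
  obtain ⟨m, hmn⟩ : ∃ m : ℕ, (m : ℤ) = r - n := ⟨(r - n).toNat, by omega⟩
  have hmr : m ≤ r := by omega
  let b : Fin r → ℝ := fun i => a i - 1 + (if (i : ℕ) < m then 1 else 0)
  have hbsum : ∑ i, b i = 0 := by
    simp only [b, Finset.sum_add_distrib, Finset.sum_sub_distrib, Finset.sum_boole, hn]
    rw [Fin.card_filter_val_lt, min_eq_right hmr]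
    have : (m : ℝ) = r - n := by exact_mod_cast hmn
    simp [this]
  have hbb : ∀ i j, b i ≤ b j + 1 := by
    intro i j
    have := h0 j
    have := h1 i
    simp only [b]
    split_ifs with hi hj hj
    · linarith
    · have : a i ≤ a j := hm (Fin.le_def.2 (by omega))
      linarith
    · linarith
    · linarith
  refine ⟨b ∘ Tuple.sort b, Tuple.monotone_sort b, fun i j => hbb _ _, ?_, ?_⟩
  · rw [← hbsum]; exact Equiv.sum_comp _ b
  · simp only [Function.comp]
    rw [aux_map_perm (fun i => Circle.exp (2 * Real.pi * b i)), ← ha]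
    congr 1
    funext i
    rw [aux_exp]
    by_cases h : (i : ℕ) < m
    · exact ⟨0, by simp [b, h]⟩
    · exact ⟨-1, by simp [b, h]; ring⟩

theorem aux_mem {r : ℕ} (hr : 1 ≤ r) (s : Fin r → ℝ)
    (h1 : ∀ (i : ℕ) (hi : i + 1 < r) (hi' : i < r), s ⟨i, hi'⟩ ≤ s ⟨i + 1, hi⟩)
    (h2 : ∀ (p : r - 1 < r) (q : 0 < r), s ⟨r - 1, p⟩ ≤ s ⟨0, q⟩ + 1) :
    Monotone s ∧ ∀ i j, s i ≤ s j + 1 := by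
  obtain ⟨k, rfl⟩ : ∃ k, r = k + 1 := ⟨r - 1, by omega⟩
  have hm : Monotone s := by
    rw [Fin.monotone_iff_le_succ]
    intro i
    exact h1 i (by omega) (by omega)
  refine ⟨hm, fun i j => ?_⟩
  have h3 := h2 (by omega) (by omega)
  have e1 : s i ≤ s ⟨k + 1 - 1, by omega⟩ := hm (Fin.le_def.2 (by simp; omega))
  have e2 : s ⟨0, by omega⟩ ≤ s j := hm (Fin.le_def.2 (by simp))
  linarith

/-- The map `s ↦ {e^{2πi s₁}, …, e^{2πi s_r}}` is a bijection from
`A(r) = {s ∈ ℝ^r : ∑ sᵢ = 0, sᵢ ≤ sᵢ₊₁, s_r ≤ s₁ + 1}` onto the set of multisets of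
elements of `Circle` of cardinality `r` with product `1`. -/
theorem stmt_3 (r : ℕ) (hr : 1 ≤ r) :
    Set.BijOn
      (fun s : Fin r → ℝ =>
        Multiset.map (fun i => Circle.exp (2 * Real.pi * s i)) Finset.univ.val)
      {s : Fin r → ℝ |
        (∑ i, s i) = 0 ∧
        (∀ (i : ℕ) (hi : i + 1 < r), s ⟨i, by omega⟩ ≤ s ⟨i + 1, hi⟩) ∧
        s ⟨r - 1, by omega⟩ ≤ s ⟨0, by omega⟩ + 1}
      {M : Multiset Circle | Multiset.card M = r ∧ M.prod = 1} := by
  refine ⟨?_, ?_, ?_⟩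
  · rintro s ⟨h0, -, -⟩
    refine ⟨by simp, ?_⟩
    simp only [aux_prod, h0]
    simp
  · rintro s ⟨h0, h1, h2⟩ t ⟨h0', h1', h2'⟩ h
    obtain ⟨hm, hb⟩ := aux_mem hr s (fun i hi _ => h1 i hi) (fun _ _ => h2)
    obtain ⟨hm', hb'⟩ := aux_mem hr t (fun i hi _ => h1' i hi) (fun _ _ => h2')
    exact aux_inj s t hm hb hm' hb' (h0.trans h0'.symm) h
  · rintro M ⟨hM, hp⟩
    obtain ⟨s, hm, hb, h0, h⟩ := aux_surj M hM hp
    exact ⟨s, ⟨h0, fun i hi => hm (Fin.le_def.2 (by simp)), hb _ _⟩, h⟩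
end

section
/- Let m, n be coprime integers with m ≥ 2 and n ≥ 2. Let S be the set of pairs of integers (k, k') with 1 ≤ k < k' ≤ mn − 1 such that none of k, k', k' − k is divisible by m and none of k, k', k' − k is divisible by n. Then 2·|S| = (n − 1)(n − 2)(m − 1)(m − 2). -/
def TT (m n : ℕ) : Finset (ℕ × ℕ) :=
  (Finset.range (m * n) ×ˢ Finset.range (m * n)).filter fun p =>
    (p.1 % m ≠ 0 ∧ p.2 % m ≠ 0 ∧ p.1 % m ≠ p.2 % m) ∧
    (p.1 % n ≠ 0 ∧ p.2 % n ≠ 0 ∧ p.1 % n ≠ p.2 % n)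

def AA (m : ℕ) : Finset (ℕ × ℕ) := (Finset.Icc 1 (m - 1)).offDiag

theorem AA_card (m : ℕ) : (AA m).card = (m - 1) * (m - 2) := by
  unfold AA
  rw [Finset.offDiag_card]
  simp only [Nat.card_Icc, Nat.add_sub_cancel]
  rw [← Nat.mul_sub_one]
  rfl

theorem TT_card (m n : ℕ) (hm : 2 ≤ m) (hn : 2 ≤ n) (hco : Nat.Coprime m n) :
    (TT m n).card = (AA m ×ˢ AA n).card := by
  have inj : ∀ a b : ℕ, a < m * n → b < m * n → a % m = b % m → a % n = b % n → a = b := by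
    intro a b ha hb h1 h2
    have h : a ≡ b [MOD m * n] := (Nat.modEq_and_modEq_iff_modEq_mul hco).1 ⟨h1, h2⟩
    exact Nat.ModEq.eq_of_lt_of_lt h ha hb
  have surj : ∀ a b : ℕ, a < m → b < n → ∃ x < m * n, x % m = a ∧ x % n = b := by
    intro a b ha hb
    refine ⟨(Nat.chineseRemainder hco a b : ℕ), ?_, ?_, ?_⟩
    · exact Nat.chineseRemainder_lt_mul hco a b (by omega) (by omega)
    · have := (Nat.chineseRemainder hco a b).2.1
      rw [Nat.ModEq, Nat.mod_eq_of_lt ha] at this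
      exact this
    · have := (Nat.chineseRemainder hco a b).2.2
      rw [Nat.ModEq, Nat.mod_eq_of_lt hb] at this
      exact this
  refine Finset.card_bij (fun p _ => ((p.1 % m, p.2 % m), (p.1 % n, p.2 % n))) ?_ ?_ ?_
  · rintro ⟨a, b⟩ h
    simp only [TT, AA, Finset.mem_filter, Finset.mem_product, Finset.mem_range,
      Finset.mem_offDiag, Finset.mem_Icc] at h ⊢
    have h1 := Nat.mod_lt a (show m > 0 by omega)
    have h2 := Nat.mod_lt b (show m > 0 by omega)
    have h3 := Nat.mod_lt a (show n > 0 by omega)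
    have h4 := Nat.mod_lt b (show n > 0 by omega)
    generalize a % m = x at *
    generalize b % m = y at *
    generalize a % n = z at *
    generalize b % n = w at *
    omega
  · rintro ⟨a, b⟩ h ⟨c, d⟩ h' e
    simp only [TT, Finset.mem_filter, Finset.mem_product, Finset.mem_range] at h h'
    simp only [Prod.mk.injEq] at e ⊢
    exact ⟨inj _ _ h.1.1 h'.1.1 e.1.1 e.2.1, inj _ _ h.1.2 h'.1.2 e.1.2 e.2.2⟩
  · rintro ⟨⟨a, b⟩, ⟨c, d⟩⟩ h
    simp only [AA, Finset.mem_product, Finset.mem_offDiag, Finset.mem_Icc] at h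
    obtain ⟨x, hx, hx1, hx2⟩ := surj a c (by omega) (by omega)
    obtain ⟨y, hy, hy1, hy2⟩ := surj b d (by omega) (by omega)
    refine ⟨(x, y), ?_, by simp [*]⟩
    simp only [TT, Finset.mem_filter, Finset.mem_product, Finset.mem_range, hx1, hx2, hy1, hy2]
    refine ⟨⟨hx, hy⟩, ?_⟩
    omega

theorem dvd_aux (m a b : ℕ) (h : a < b) : m ∣ b - a ↔ a % m = b % m :=
  (Nat.modEq_iff_dvd' h.le).symm

/-- For coprime `m, n ≥ 2`, let `S` be the set of pairs `1 ≤ k < k' ≤ mn - 1` such that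
none of `k, k', k' - k` is divisible by `m` and none is divisible by `n`. Then
`2|S| = (n-1)(n-2)(m-1)(m-2)`. -/
theorem stmt_14 (m n : ℕ) (hm : 2 ≤ m) (hn : 2 ≤ n) (hco : Nat.Coprime m n) :
    2 * ((Finset.Icc 1 (m * n - 1) ×ˢ Finset.Icc 1 (m * n - 1)).filter fun p =>
        p.1 < p.2 ∧
        ¬ m ∣ p.1 ∧ ¬ m ∣ p.2 ∧ ¬ m ∣ (p.2 - p.1) ∧
        ¬ n ∣ p.1 ∧ ¬ n ∣ p.2 ∧ ¬ n ∣ (p.2 - p.1)).card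
      = (n - 1) * (n - 2) * (m - 1) * (m - 2) := by
  have hS : ((Finset.Icc 1 (m * n - 1) ×ˢ Finset.Icc 1 (m * n - 1)).filter fun p =>
        p.1 < p.2 ∧
        ¬ m ∣ p.1 ∧ ¬ m ∣ p.2 ∧ ¬ m ∣ (p.2 - p.1) ∧
        ¬ n ∣ p.1 ∧ ¬ n ∣ p.2 ∧ ¬ n ∣ (p.2 - p.1))
      = (TT m n).filter fun p => p.1 < p.2 := by
    ext ⟨a, b⟩
    simp only [TT, Finset.mem_filter, Finset.mem_product, Finset.mem_range, Finset.mem_Icc]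
    by_cases hab : a < b
    · rw [dvd_aux m a b hab, dvd_aux n a b hab]
      simp only [Nat.dvd_iff_mod_eq_zero]
      have h0 : a % m ≠ 0 → a ≠ 0 := by rintro h rfl; simp at h
      generalize m * n = N
      constructor
      · rintro ⟨h1, h2, h3, h4, h5, h6, h7, h8⟩
        exact ⟨⟨by omega, ⟨h3, h4, h5⟩, h6, h7, h8⟩, h2⟩
      · rintro ⟨⟨h1, ⟨h3, h4, h5⟩, h6, h7, h8⟩, h2⟩
        have := h0 h3
        exact ⟨by omega, h2, h3, h4, h5, h6, h7, h8⟩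
    · simp [hab]
  have hsw : ((TT m n).filter fun p => p.1 < p.2).card
      = ((TT m n).filter fun p => ¬ p.1 < p.2).card := by
    refine Finset.card_bij (fun p _ => (p.2, p.1)) ?_ ?_ ?_
    · rintro ⟨a, b⟩ h
      simp only [TT, Finset.mem_filter, Finset.mem_product, Finset.mem_range] at h ⊢
      obtain ⟨⟨⟨h1, h2⟩, ⟨h3, h4, h5⟩, h6, h7, h8⟩, h9⟩ := h
      exact ⟨⟨⟨h2, h1⟩, ⟨h4, h3, h5.symm⟩, h7, h6, h8.symm⟩, by omega⟩
    · rintro ⟨a, b⟩ h ⟨c, d⟩ h' e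
      simp only [Prod.mk.injEq] at e ⊢
      exact e.symm
    · rintro ⟨a, b⟩ h
      refine ⟨(b, a), ?_, rfl⟩
      simp only [TT, Finset.mem_filter, Finset.mem_product, Finset.mem_range] at h ⊢
      obtain ⟨⟨⟨h1, h2⟩, ⟨h3, h4, h5⟩, h6, h7, h8⟩, h9⟩ := h
      have : a ≠ b := by rintro rfl; exact h5 rfl
      exact ⟨⟨⟨h2, h1⟩, ⟨h4, h3, h5.symm⟩, h7, h6, h8.symm⟩, by omega⟩
  have hadd := Finset.card_filter_add_card_filter_not (s := TT m n) (fun p => p.1 < p.2)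
  rw [← hsw, TT_card m n hm hn hco, Finset.card_product, AA_card, AA_card] at hadd
  rw [hS, two_mul, hadd]
  ring
end

section
/- Let m be an odd positive integer. For c ∈ ℤ/mℤ, let e_c : ℤ/mℤ → ℤ/2ℤ be the function with e_c(x) = 1 if x = c or x = −c, and e_c(x) = 0 otherwise. Then for every c ∈ ℤ/mℤ with c ≠ 0, the function e_c lies in the ℤ/2ℤ-linear span of the set of functions {e_a + e_b + e_{a−b} : a, b ∈ ℤ/mℤ, a ≠ 0, b ≠ 0, a ≠ b}. -/
/-- Let `m` be odd and, for `c : ZMod m`, let `e c : ZMod m → ZMod 2` be the indicator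
of `{c, -c}`. Then for every `c ≠ 0`, the function `e c` lies in the `ZMod 2`-span of
the functions `e a + e b + e (a - b)` with `a, b ≠ 0`, `a ≠ b`. -/
theorem stmt_16 (m : ℕ) (hm : 0 < m) (hodd : Odd m)
    (e : ZMod m → (ZMod m → ZMod 2))
    (he : ∀ c x : ZMod m, e c x = if x = c ∨ x = -c then 1 else 0) :
    ∀ c : ZMod m, c ≠ 0 →
      e c ∈ Submodule.span (ZMod 2)
        {f : ZMod m → ZMod 2 |
          ∃ a b : ZMod m, a ≠ 0 ∧ b ≠ 0 ∧ a ≠ b ∧ f = e a + e b + e (a - b)} := by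
  intro c hc
  obtain ⟨k, hk⟩ := hodd
  have h0 : (2 * (k : ZMod m) + 1) = 0 := by
    have h := ZMod.natCast_self m
    have h2 : ((2 * k + 1 : ℕ) : ZMod m) = 0 := by rw [← hk]; exact h
    push_cast at h2
    exact h2
  obtain ⟨d, hd⟩ : ∃ d : ZMod m, c = d + d :=
    ⟨((k : ZMod m) + 1) * c, by linear_combination (-c) * h0⟩
  have hd0 : d ≠ 0 := by
    rintro rfl
    exact hc (by simpa using hd)
  apply Submodule.subset_span
  refine ⟨c, d, hc, hd0, ?_, ?_⟩
  · intro h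
    apply hd0
    linear_combination h - hd
  · have h1 : c - d = d := by rw [hd]; ring
    rw [h1]
    funext x
    simp only [Pi.add_apply]
    rw [add_assoc, CharTwo.add_self_eq_zero, add_zero]
end
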